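/- Let n ≥ 2 be an integer. For every ε > 0 there exists a constant C = C(n, ε) such that for all real H ≥ 2 and all monic polynomials f ∈ ℚ[X] of degree n, the number of n×n matrices with all entries in E(H) whose characteristic polynomial equals f is at most: C·H^{ε} if n = 2 and f ≠ X²; C·H^{3+ε} if n = 3; C·H^{n²/2−1/(2n−2)+ε} if n ≥ 4 and the coefficient of X^{n−1} in f is nonzero; and C·H^{n²/2+ε} if n ≥ 4 and the coefficient of X^{n−1} in f is zero. -/

import Mathlib

/-- The set of Egyptian (unit) fractions `1/a` with `a` a nonzero integer, `|a| ≤ H`. -/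
def Egyptian (H : ℝ) : Set ℚ := {x : ℚ | ∃ a : ℤ, a ≠ 0 ∧ (|a| : ℝ) ≤ H ∧ x = 1 / (a : ℚ)}

/-!
A matrix with prescribed characteristic polynomial has prescribed trace, and so has its square; only
these two conditions are used. With entries `1 / a i j` they read `∑ 1 / a i i = t` and
`∑_{i < j} 1 / (a i j * a j i) = (s - ∑ 1 / (a i i) ^ 2) / 2`.

Clearing denominators shows that in the product of any solution of `1 / x₁ + ⋯ + 1 / x_m = t` a
prime not dividing the denominator of `t` cannot occur exactly once. Up to divisor functions such a
product is determined by a square root, and the solution by the product, so that there are at most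
about `N ^ (m / 2)` solutions with `|xᵢ| ≤ N`. If `t ≠ 0`, some `xᵢ` is at most `m` times the
denominator, which improves the exponent to `(m - 1) / 2`. Applied to the diagonal and then to the
products `a i j * a j i ≤ N ^ 2`, which determine their factors up to a divisor function, this gives
the exponent `n / 2 + n (n - 1) / 2 = n ^ 2 / 2`, and `(n ^ 2 - 1) / 2` if the trace is nonzero. The
cases `n = 2` and `n = 3` use sharper bounds for two and three summands.
-/

open Finset Polynomial

section DivisorBound

lemma natCast_add_one_le_max_mul_pow {x : ℝ} (hx : 1 < x) (k : ℕ) :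
    (k : ℝ) + 1 ≤ max 1 (x - 1)⁻¹ * x ^ k := by
  have hx' : 0 < x - 1 := sub_pos.2 hx
  have hinv : 1 ≤ max 1 (x - 1)⁻¹ * (x - 1) := by
    calc (1 : ℝ) = (x - 1)⁻¹ * (x - 1) := (inv_mul_cancel₀ hx'.ne').symm
      _ ≤ max 1 (x - 1)⁻¹ * (x - 1) := mul_le_mul_of_nonneg_right (le_max_right _ _) hx'.le
  calc (k : ℝ) + 1 ≤ k * (max 1 (x - 1)⁻¹ * (x - 1)) + max 1 (x - 1)⁻¹ :=
        add_le_add (le_mul_of_one_le_right k.cast_nonneg hinv) (le_max_left _ _)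
    _ = max 1 (x - 1)⁻¹ * (1 + k * (x - 1)) := by ring
    _ ≤ max 1 (x - 1)⁻¹ * x ^ k := by
        gcongr
        simpa using one_add_mul_le_pow (a := x - 1) (by linarith) k

-- `k + 1` is the number of divisors of `p ^ k`; only the finitely many `p < 2 ^ (1 / ε)` lose a
-- constant factor.
lemma natCast_add_one_le_ite_mul_rpow {ε : ℝ} (hε : 0 < ε) {p : ℕ} (hp : 2 ≤ p) (k : ℕ) :
    (k : ℝ) + 1 ≤
      (if p < ⌈(2 : ℝ) ^ ε⁻¹⌉₊ then max 1 ((2 : ℝ) ^ ε - 1)⁻¹ else 1) * ((p : ℝ) ^ k) ^ ε := by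
  rw [← Real.rpow_pow_comm p.cast_nonneg]
  split_ifs with hpM
  · calc (k : ℝ) + 1 ≤ max 1 ((2 : ℝ) ^ ε - 1)⁻¹ * ((2 : ℝ) ^ ε) ^ k :=
          natCast_add_one_le_max_mul_pow (Real.one_lt_rpow one_lt_two hε) k
      _ ≤ max 1 ((2 : ℝ) ^ ε - 1)⁻¹ * ((p : ℝ) ^ ε) ^ k := by
          gcongr
          exact_mod_cast hp
  · have h2 : (2 : ℝ) ≤ (p : ℝ) ^ ε := by
      rw [← Real.rpow_inv_le_iff_of_pos zero_le_two p.cast_nonneg hε]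
      exact Nat.ceil_le.1 (not_lt.1 hpM)
    calc (k : ℝ) + 1 ≤ 2 ^ k := by exact_mod_cast k.lt_two_pow_self
      _ ≤ 1 * ((p : ℝ) ^ ε) ^ k := by rw [one_mul]; gcongr

theorem exists_card_divisors_le_mul_rpow {ε : ℝ} (hε : 0 < ε) :
    ∃ C : ℝ, 0 ≤ C ∧ ∀ m : ℕ, (#m.divisors : ℝ) ≤ C * (m : ℝ) ^ ε := by
  set M := ⌈(2 : ℝ) ^ ε⁻¹⌉₊
  set K : ℝ := max 1 ((2 : ℝ) ^ ε - 1)⁻¹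
  have hK : 1 ≤ K := le_max_left _ _
  refine ⟨K ^ M, by positivity, fun m => ?_⟩
  rcases eq_or_ne m 0 with rfl | hm
  · simp [hε.ne']
  have hconst : ∏ p ∈ m.primeFactors, (if p < M then K else 1) ≤ K ^ M := by
    rw [prod_ite, prod_const, prod_const_one, mul_one]
    gcongr
    calc #{p ∈ m.primeFactors | p < M} ≤ #(range M) :=
          card_le_card fun p hp => mem_range.2 (mem_filter.1 hp).2
      _ = M := card_range M
  rw [Nat.card_divisors hm]
  push_cast
  calc ∏ p ∈ m.primeFactors, ((m.factorization p : ℝ) + 1)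
      ≤ ∏ p ∈ m.primeFactors, (if p < M then K else 1) * ((p : ℝ) ^ m.factorization p) ^ ε :=
        prod_le_prod (fun _ _ => by positivity) fun p hp =>
          natCast_add_one_le_ite_mul_rpow hε (Nat.prime_of_mem_primeFactors hp).two_le _
    _ = (∏ p ∈ m.primeFactors, if p < M then K else 1) *
          (∏ p ∈ m.primeFactors, (p : ℝ) ^ m.factorization p) ^ ε := by
        rw [prod_mul_distrib, Real.finsetProd_rpow _ _ fun _ _ => by positivity]
    _ = (∏ p ∈ m.primeFactors, if p < M then K else 1) * (m : ℝ) ^ ε := by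
        congr 2
        exact_mod_cast Nat.prod_factorization_pow_eq_self hm
    _ ≤ K ^ M * (m : ℝ) ^ ε := by gcongr

/-- The largest number of divisors of a positive integer that is at most `N`. All bounds below are
explicit in `maxDivisors`, so that the loss `N ^ ε` of the divisor bound is paid only once. -/
def maxDivisors (N : ℕ) : ℕ := (range (N + 1)).sup fun m => #m.divisors

lemma card_divisors_le_maxDivisors {m N : ℕ} (h : m ≤ N) : #m.divisors ≤ maxDivisors N :=
  le_sup (f := fun m : ℕ => #m.divisors) (mem_range_succ_iff.2 h)

lemma maxDivisors_mono : Monotone maxDivisors := fun _ _ h =>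
  sup_mono (range_subset_range.2 (Nat.succ_le_succ h))

lemma maxDivisors_pos {N : ℕ} (hN : 0 < N) : 0 < maxDivisors N :=
  (card_divisors_le_maxDivisors (m := 1) hN).trans_lt' (by simp)

lemma exists_maxDivisors_le_mul_rpow {ε : ℝ} (hε : 0 < ε) :
    ∃ C : ℝ, 0 ≤ C ∧ ∀ N : ℕ, (maxDivisors N : ℝ) ≤ C * (N : ℝ) ^ ε := by
  obtain ⟨C, hC0, hC⟩ := exists_card_divisors_le_mul_rpow hε
  refine ⟨C, hC0, fun N => ?_⟩
  obtain ⟨m, hm, hmax⟩ := exists_mem_eq_sup (range (N + 1)) nonempty_range_add_one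
    fun m : ℕ => #m.divisors
  have hmN : m ≤ N := mem_range_succ_iff.1 hm
  calc (maxDivisors N : ℝ) = #m.divisors := congrArg Nat.cast hmax
    _ ≤ C * (m : ℝ) ^ ε := hC m
    _ ≤ C * (N : ℝ) ^ ε := by gcongr

lemma card_int_divisors (z : ℤ) : #z.divisors = 2 * #z.natAbs.divisors := by
  rw [Int.divisors, card_disjUnion, card_map, card_map, two_mul]

lemma card_int_divisorsAntidiag (z : ℤ) : #z.divisorsAntidiag = #z.divisors := by
  rw [← Int.image_fst_divisorsAntidiag, card_image_of_injOn]
  rintro ⟨x, y⟩ hxy ⟨x', y'⟩ hxy' rfl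
  simp only [SetLike.mem_coe, Int.mem_divisorsAntidiag] at hxy hxy'
  have hx : x ≠ 0 := left_ne_zero_of_mul (hxy.1 ▸ hxy.2)
  rw [mul_left_cancel₀ hx (hxy.1.trans hxy'.1.symm)]

lemma card_int_divisors_le {z : ℤ} {N : ℕ} (h : z.natAbs ≤ N) :
    #z.divisors ≤ 2 * maxDivisors N := by
  rw [card_int_divisors]
  exact Nat.mul_le_mul_left 2 (card_divisors_le_maxDivisors h)

lemma card_int_divisorsAntidiag_le {z : ℤ} {N : ℕ} (h : z.natAbs ≤ N) :
    #z.divisorsAntidiag ≤ 2 * maxDivisors N :=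
  (card_int_divisorsAntidiag z).trans_le (card_int_divisors_le h)

end DivisorBound

section PowerfulAwayFrom

/-- `M` is a multiple of `d` in which every prime not dividing `d` occurs with exponent `0` or at
least `2`. The denominators and the products of solutions of `∑ i, 1 / a i = t` are related in this
way. -/
def PowerfulAwayFrom (d M : ℕ) : Prop :=
  d ∣ M ∧ ∀ p : ℕ, p.Prime → ¬ p ∣ d → p ∣ M → p ^ 2 ∣ M

lemma squarefree_dvd_of_forall_prime_dvd {b m : ℕ} (hb : Squarefree b)
    (h : ∀ p : ℕ, p.Prime → p ∣ b → p ∣ m) : b ∣ m := by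
  rw [← Nat.prod_primeFactors_of_squarefree hb]
  exact prod_primes_dvd m (fun p hp => (Nat.prime_of_mem_primeFactors hp).prime) fun p hp =>
    h p (Nat.prime_of_mem_primeFactors hp) (Nat.dvd_of_mem_primeFactors hp)

lemma PowerfulAwayFrom.exists_eq_mul_sq_mul {d M : ℕ} (h : PowerfulAwayFrom d M) :
    ∃ b c : ℕ, M = d * (c ^ 2 * b) ∧ b ∣ d * c := by
  obtain ⟨⟨k, rfl⟩, hpow⟩ := h
  obtain ⟨b, c, rfl, hb⟩ := Nat.sq_mul_squarefree k
  refine ⟨b, c, rfl, squarefree_dvd_of_forall_prime_dvd hb fun p hp hpb => ?_⟩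
  by_contra hpdc
  have hpd : p.Coprime d := hp.coprime_iff_not_dvd.2 fun hd => hpdc (hd.mul_right c)
  have hpc : p.Coprime c := hp.coprime_iff_not_dvd.2 fun hc => hpdc (hc.mul_left d)
  have hp2 : p ^ 2 ∣ d * (c ^ 2 * b) :=
    hpow p hp (hp.coprime_iff_not_dvd.1 hpd) ((hpb.mul_left _).mul_left d)
  have hp2b : p ^ 2 ∣ b :=
    (Nat.Coprime.pow 2 2 hpc).dvd_of_dvd_mul_left ((hpd.pow_left 2).dvd_of_dvd_mul_left hp2)
  exact hp.not_isUnit (hb p (sq p ▸ hp2b))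

lemma card_le_of_forall_powerfulAwayFrom {S : Finset ℕ} {d L X : ℕ}
    (hpow : ∀ M ∈ S, PowerfulAwayFrom d M) (h0 : 0 ∉ S) (hL : ∀ M ∈ S, M ≤ L)
    (hX : ∀ M ∈ S, M ≤ X * d) : #S ≤ X.sqrt * maxDivisors L := by
  set T : Finset ℕ := {c ∈ Icc 1 X.sqrt | d * c ≤ L}
  have hsub : S ⊆ T.biUnion fun c => (d * c).divisors.image fun b => d * (c ^ 2 * b) := by
    intro M hM
    obtain ⟨b, c, rfl, hb⟩ := (hpow M hM).exists_eq_mul_sq_mul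
    have hne : d * (c ^ 2 * b) ≠ 0 := ne_of_mem_of_not_mem hM h0
    simp only [mul_ne_zero_iff, ne_eq, pow_eq_zero_iff two_ne_zero] at hne
    obtain ⟨hd, hc, hb0⟩ := hne
    have hcX : c ^ 2 ≤ X := (Nat.le_mul_of_pos_right _ (Nat.pos_of_ne_zero hb0)).trans <|
      Nat.le_of_mul_le_mul_left ((hX _ hM).trans_eq (mul_comm X d)) (Nat.pos_of_ne_zero hd)
    have hdL : d * c ≤ L := (hL _ hM).trans' <| Nat.mul_le_mul_left d <|
      (Nat.le_self_pow two_ne_zero c).trans (Nat.le_mul_of_pos_right _ (Nat.pos_of_ne_zero hb0))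
    simp only [mem_biUnion, mem_image, T, mem_filter, mem_Icc, Nat.mem_divisors]
    exact ⟨c, ⟨⟨Nat.pos_of_ne_zero hc, Nat.le_sqrt'.2 hcX⟩, hdL⟩, b, ⟨hb, mul_ne_zero hd hc⟩, rfl⟩
  calc #S ≤ #T * maxDivisors L := (card_le_card hsub).trans <|
        card_biUnion_le_card_mul _ _ _ fun c hc =>
          card_image_le.trans (card_divisors_le_maxDivisors (mem_filter.1 hc).2)
    _ ≤ X.sqrt * maxDivisors L := by
        gcongr
        exact (card_filter_le _ _).trans_eq (by simp)

end PowerfulAwayFrom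

section ReciprocalSums

variable {ι : Type*} [Fintype ι]

lemma sum_inv_mul_prod [DecidableEq ι] {K : Type*} [Field K] {a : ι → K} (ha : ∀ i, a i ≠ 0) :
    (∑ i, (a i)⁻¹) * ∏ i, a i = ∑ i, ∏ j ∈ univ.erase i, a j := by
  rw [sum_mul]
  refine sum_congr rfl fun i hi => ?_
  rw [← mul_prod_erase _ _ hi, inv_mul_cancel_left₀ (ha i)]

lemma num_sum_inv_mul_prod [DecidableEq ι] {a : ι → ℤ} (ha : ∀ i, a i ≠ 0) :
    (∑ i, (a i : ℚ)⁻¹).num * ∏ i, a i =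
      (∑ i, (a i : ℚ)⁻¹).den * ∑ i, ∏ j ∈ univ.erase i, a j := by
  have h := sum_inv_mul_prod fun i => Int.cast_ne_zero (α := ℚ).2 (ha i)
  set t := ∑ i, (a i : ℚ)⁻¹
  have hnum : (t.num : ℚ) = t.den * t := by rw [mul_comm, Rat.mul_den_eq_num]
  have hcast : (t.num : ℚ) * ∏ i, (a i : ℚ) =
      t.den * ∑ i, ∏ j ∈ univ.erase i, (a j : ℚ) := by rw [hnum, mul_assoc, h]
  exact_mod_cast hcast

-- If `p` divides `a i`, it divides every summand except possibly the `i`-th one.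
lemma sq_dvd_prod_of_prime_of_dvd_sum_prod_erase [DecidableEq ι] {R : Type*} [CommRing R]
    {p : R} (hp : Prime p) {a : ι → R} (hprod : p ∣ ∏ i, a i)
    (hsum : p ∣ ∑ i, ∏ j ∈ univ.erase i, a j) : p ^ 2 ∣ ∏ i, a i := by
  obtain ⟨i, hi, hpi⟩ := (hp.dvd_finsetProd_iff _).1 hprod
  rw [← add_sum_erase _ _ hi] at hsum
  have hother : p ∣ ∑ k ∈ univ.erase i, ∏ j ∈ univ.erase k, a j :=
    dvd_sum fun k hk => hpi.trans <|
      dvd_prod_of_mem _ (mem_erase.2 ⟨(ne_of_mem_erase hk).symm, mem_univ i⟩)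
  rw [sq, ← mul_prod_erase _ _ hi]
  exact mul_dvd_mul hpi ((dvd_add_left hother).1 hsum)

lemma powerfulAwayFrom_prod_natAbs {a : ι → ℤ} (ha : ∀ i, a i ≠ 0) :
    PowerfulAwayFrom (∑ i, (a i : ℚ)⁻¹).den (∏ i, (a i).natAbs) := by
  classical
  have hid := num_sum_inv_mul_prod ha
  set t := ∑ i, (a i : ℚ)⁻¹
  have habs : ∏ i, (a i).natAbs = (∏ i, a i).natAbs := (map_prod Int.natAbsHom a univ).symm
  rw [PowerfulAwayFrom, habs]
  simp only [← Int.natCast_dvd, Nat.cast_pow]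
  constructor
  · have hcop : IsCoprime (t.den : ℤ) t.num :=
      Int.isCoprime_iff_gcd_eq_one.2 (Int.gcd_comm _ _ ▸ t.reduced)
    exact hcop.dvd_of_dvd_mul_left (Dvd.intro _ hid.symm)
  · intro p hp hpd hpa
    have hp' : Prime (p : ℤ) := Nat.prime_iff_prime_int.1 hp
    refine sq_dvd_prod_of_prime_of_dvd_sum_prod_erase hp' hpa ?_
    exact (hp'.dvd_or_dvd (hid ▸ hpa.mul_left _)).resolve_left fun h =>
      hpd (Int.natCast_dvd_natCast.1 h)

/-- The nonzero integers of absolute value at most `N`. -/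
noncomputable def nonzeroBox (N : ℕ) : Finset ℤ := (Icc (-N : ℤ) N).erase 0

lemma mem_nonzeroBox {N : ℕ} {z : ℤ} : z ∈ nonzeroBox N ↔ z ≠ 0 ∧ z.natAbs ≤ N := by
  simp only [nonzeroBox, mem_erase, mem_Icc]
  omega

lemma card_nonzeroBox (N : ℕ) : #(nonzeroBox N) = 2 * N := by
  rw [nonzeroBox, card_erase_of_mem (by simp), Int.card_Icc]
  omega

lemma mul_mem_nonzeroBox {M N : ℕ} {x y : ℤ} (hx : x ∈ nonzeroBox M) (hy : y ∈ nonzeroBox N) :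
    x * y ∈ nonzeroBox (M * N) := by
  rw [mem_nonzeroBox] at *
  exact ⟨mul_ne_zero hx.1 hy.1, Int.natAbs_mul x y ▸ Nat.mul_le_mul hx.2 hy.2⟩

lemma card_prod_natAbs_fiber_le {M L : ℕ} (hM : M ≠ 0) (hL : M ≤ L) (S : Finset (ι → ℤ)) :
    #{a ∈ S | ∏ i, (a i).natAbs = M} ≤ (2 * maxDivisors L) ^ Fintype.card ι := by
  classical
  calc #{a ∈ S | ∏ i, (a i).natAbs = M} ≤ #(Fintype.piFinset fun _ : ι => (M : ℤ).divisors) := by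
        refine card_le_card fun a ha => Fintype.mem_piFinset.2 fun i => ?_
        rw [Int.mem_divisors, Int.dvd_natCast, ← (mem_filter.1 ha).2]
        exact ⟨dvd_prod_of_mem _ (mem_univ i), by rw [(mem_filter.1 ha).2]; exact_mod_cast hM⟩
    _ ≤ (2 * maxDivisors L) ^ Fintype.card ι := by
        rw [Fintype.card_piFinset, prod_const, card_univ]
        exact Nat.pow_le_pow_left (card_int_divisors_le (by simpa using hL)) _

variable [DecidableEq ι]

variable (ι) in
/-- The solutions of `∑ i, 1 / a i = t` in nonzero integers `a i` of absolute value at most `N`. -/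
noncomputable def reciprocalSols (N : ℕ) (t : ℚ) : Finset (ι → ℤ) :=
  {a ∈ Fintype.piFinset fun _ => nonzeroBox N | ∑ i, (a i : ℚ)⁻¹ = t}

variable {N : ℕ} {t : ℚ} {a : ι → ℤ}

lemma mem_reciprocalSols :
    a ∈ reciprocalSols ι N t ↔ (∀ i, a i ∈ nonzeroBox N) ∧ ∑ i, (a i : ℚ)⁻¹ = t := by
  rw [reciprocalSols, mem_filter, Fintype.mem_piFinset]

lemma ne_zero_of_mem_reciprocalSols (ha : a ∈ reciprocalSols ι N t) (i : ι) : a i ≠ 0 :=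
  (mem_nonzeroBox.1 ((mem_reciprocalSols.1 ha).1 i)).1

lemma natAbs_le_of_mem_reciprocalSols (ha : a ∈ reciprocalSols ι N t) (i : ι) :
    (a i).natAbs ≤ N :=
  (mem_nonzeroBox.1 ((mem_reciprocalSols.1 ha).1 i)).2

lemma prod_natAbs_le_of_mem_reciprocalSols (ha : a ∈ reciprocalSols ι N t) :
    ∏ i, (a i).natAbs ≤ N ^ Fintype.card ι :=
  prod_le_pow_card _ _ _ fun i _ => natAbs_le_of_mem_reciprocalSols ha i

lemma prod_natAbs_ne_zero_of_mem_reciprocalSols (ha : a ∈ reciprocalSols ι N t) :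
    ∏ i, (a i).natAbs ≠ 0 :=
  prod_ne_zero_iff.2 fun i _ => Int.natAbs_ne_zero.2 (ne_zero_of_mem_reciprocalSols ha i)

lemma powerfulAwayFrom_of_mem_reciprocalSols (ha : a ∈ reciprocalSols ι N t) :
    PowerfulAwayFrom t.den (∏ i, (a i).natAbs) :=
  (mem_reciprocalSols.1 ha).2 ▸ powerfulAwayFrom_prod_natAbs (ne_zero_of_mem_reciprocalSols ha)

variable (ι) in
lemma card_reciprocalSols_le_sqrt_mul (N : ℕ) (t : ℚ) (X : ℕ)
    (hX : ∀ a ∈ reciprocalSols ι N t, ∏ i, (a i).natAbs ≤ X * t.den) :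
    #(reciprocalSols ι N t) ≤
      (2 * maxDivisors (N ^ Fintype.card ι)) ^ (Fintype.card ι + 1) * X.sqrt := by
  set D := maxDivisors (N ^ Fintype.card ι)
  set P := (reciprocalSols ι N t).image fun a => ∏ i, (a i).natAbs
  have hP : #P ≤ X.sqrt * D := by
    refine card_le_of_forall_powerfulAwayFrom (d := t.den) ?_ ?_ ?_ ?_
    · exact forall_mem_image.2 fun _ => powerfulAwayFrom_of_mem_reciprocalSols
    · simpa only [P, mem_image, not_exists, not_and] using
        fun _ => prod_natAbs_ne_zero_of_mem_reciprocalSols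
    · exact forall_mem_image.2 fun _ => prod_natAbs_le_of_mem_reciprocalSols
    · exact forall_mem_image.2 hX
  calc #(reciprocalSols ι N t) ≤ (2 * D) ^ Fintype.card ι * #P := by
        refine card_le_mul_card_image _ _ (forall_mem_image.2 fun a ha => ?_)
        exact card_prod_natAbs_fiber_le (prod_natAbs_ne_zero_of_mem_reciprocalSols ha)
          (prod_natAbs_le_of_mem_reciprocalSols ha) _
    _ ≤ (2 * D) ^ Fintype.card ι * (X.sqrt * (2 * D)) :=
        Nat.mul_le_mul_left _ (hP.trans (Nat.mul_le_mul_left _ (Nat.le_mul_of_pos_left D two_pos)))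
    _ = (2 * D) ^ (Fintype.card ι + 1) * X.sqrt := by ring

variable (ι) in
theorem card_reciprocalSols_le (N : ℕ) (t : ℚ) :
    #(reciprocalSols ι N t) ≤
      (2 * maxDivisors (N ^ Fintype.card ι)) ^ (Fintype.card ι + 1) *
        (N ^ Fintype.card ι).sqrt :=
  card_reciprocalSols_le_sqrt_mul ι N t _ fun _ ha =>
    (prod_natAbs_le_of_mem_reciprocalSols ha).trans (Nat.le_mul_of_pos_right _ t.den_pos)

-- A nonzero `t` has absolute value at least `1 / t.den`, so some `1 / a i` is not too small.
lemma exists_natAbs_le_of_mem_reciprocalSols (ht : t ≠ 0) (ha : a ∈ reciprocalSols ι N t) :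
    ∃ i, (a i).natAbs ≤ Fintype.card ι * t.den := by
  by_contra! h
  have hm : 0 < (Fintype.card ι : ℚ) := by
    have : Nonempty ι := by
      by_contra hι
      rw [not_nonempty_iff] at hι
      exact ht ((mem_reciprocalSols.1 ha).2 ▸ Fintype.sum_empty _)
    exact_mod_cast Fintype.card_pos
  have hd : 0 < (t.den : ℚ) := by exact_mod_cast t.den_pos
  have hlt : ∀ i, |(a i : ℚ)⁻¹| < (Fintype.card ι * t.den : ℚ)⁻¹ := fun i => by
    rw [abs_inv, ← Int.cast_abs, ← Int.natCast_natAbs, Int.cast_natCast]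
    exact inv_strictAnti₀ (by positivity) (by exact_mod_cast h i)
  have hlow : (t.den : ℚ)⁻¹ ≤ |t| := by
    rw [inv_le_iff_one_le_mul₀ hd, ← Nat.abs_cast t.den, ← abs_mul, Rat.mul_den_eq_num]
    exact_mod_cast Int.one_le_abs (Rat.num_ne_zero.2 ht)
  refine hlow.not_gt ?_
  calc |t| = |∑ i, (a i : ℚ)⁻¹| := by rw [(mem_reciprocalSols.1 ha).2]
    _ ≤ ∑ i, |(a i : ℚ)⁻¹| := abs_sum_le_sum_abs _ _
    _ < ∑ _i : ι, (Fintype.card ι * t.den : ℚ)⁻¹ :=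
        sum_lt_sum_of_nonempty (card_pos.1 (by exact_mod_cast hm)) fun i _ => hlt i
    _ = (t.den : ℚ)⁻¹ := by
        rw [sum_const, card_univ, nsmul_eq_mul]
        field_simp

lemma prod_natAbs_le_mul_den_of_mem_reciprocalSols (ht : t ≠ 0)
    (ha : a ∈ reciprocalSols ι N t) :
    ∏ i, (a i).natAbs ≤ Fintype.card ι * N ^ (Fintype.card ι - 1) * t.den := by
  obtain ⟨i, hi⟩ := exists_natAbs_le_of_mem_reciprocalSols ht ha
  calc ∏ j, (a j).natAbs = (a i).natAbs * ∏ j ∈ univ.erase i, (a j).natAbs :=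
        (mul_prod_erase _ _ (mem_univ i)).symm
    _ ≤ Fintype.card ι * t.den * N ^ #(univ.erase i) :=
        Nat.mul_le_mul hi <|
          prod_le_pow_card _ _ _ fun j _ => natAbs_le_of_mem_reciprocalSols ha j
    _ = Fintype.card ι * N ^ (Fintype.card ι - 1) * t.den := by
        rw [card_erase_of_mem (mem_univ i), card_univ]
        ring

variable (ι) in
theorem card_reciprocalSols_le_of_ne_zero (N : ℕ) (ht : t ≠ 0) :
    #(reciprocalSols ι N t) ≤
      (2 * maxDivisors (N ^ Fintype.card ι)) ^ (Fintype.card ι + 1) *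
        (Fintype.card ι * N ^ (Fintype.card ι - 1)).sqrt :=
  card_reciprocalSols_le_sqrt_mul ι N t _ fun _ =>
    prod_natAbs_le_mul_den_of_mem_reciprocalSols ht

variable (ι) in
lemma card_reciprocalSols_le_one [Subsingleton ι] (N : ℕ) (t : ℚ) :
    #(reciprocalSols ι N t) ≤ 1 := by
  refine card_le_one.2 fun a ha b hb => funext fun i => ?_
  have hab := (mem_reciprocalSols.1 ha).2.trans (mem_reciprocalSols.1 hb).2.symm
  rw [Fintype.sum_subsingleton _ i, Fintype.sum_subsingleton _ i] at hab
  exact_mod_cast inv_injective hab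

-- Clearing denominators in `1 / x + 1 / y = p / q` gives `(p x - q) (p y - q) = q ^ 2`.
lemma card_reciprocalSols_fin_two_le (N : ℕ) (ht : t ≠ 0) :
    #(reciprocalSols (Fin 2) N t) ≤ 2 * maxDivisors (N ^ 4) := by
  rcases (reciprocalSols (Fin 2) N t).eq_empty_or_nonempty with h | ⟨a, ha⟩
  · simp [h]
  have hden : t.den ≤ N ^ 2 :=
    (Nat.le_of_dvd (Nat.pos_of_ne_zero (prod_natAbs_ne_zero_of_mem_reciprocalSols ha))
      (powerfulAwayFrom_of_mem_reciprocalSols ha).1).trans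
      (prod_natAbs_le_of_mem_reciprocalSols ha)
  have hfactor : ∀ b ∈ reciprocalSols (Fin 2) N t,
      (t.num * b 0 - t.den) * (t.num * b 1 - t.den) = (t.den : ℤ) ^ 2 := fun b hb => by
    have h := num_sum_inv_mul_prod (ne_zero_of_mem_reciprocalSols hb)
    rw [(mem_reciprocalSols.1 hb).2] at h
    have h0 : univ.erase (0 : Fin 2) = {1} := rfl
    have h1 : univ.erase (1 : Fin 2) = {0} := rfl
    rw [Fin.sum_univ_two, h0, h1, prod_singleton, prod_singleton, Fin.prod_univ_two] at h
    linear_combination t.num * h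
  calc #(reciprocalSols (Fin 2) N t) ≤ #((t.den : ℤ) ^ 2).divisors := by
        refine card_le_card_of_injOn (fun b => t.num * b 0 - t.den) (fun b hb => ?_) ?_
        · have hd0 : (t.den : ℤ) ^ 2 ≠ 0 := pow_ne_zero 2 (Int.natCast_ne_zero.2 t.den_nz)
          exact Int.mem_divisors.2 ⟨Dvd.intro _ (hfactor b hb), hd0⟩
        · intro b hb c hc (hbc : t.num * b 0 - t.den = t.num * c 0 - t.den)
          have h0 : b 0 = c 0 := by
            simpa [Rat.num_ne_zero.2 ht] using hbc
          have hsum := (mem_reciprocalSols.1 hb).2.trans (mem_reciprocalSols.1 hc).2.symm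
          rw [Fin.sum_univ_two, Fin.sum_univ_two, h0, add_right_inj, inv_inj] at hsum
          exact funext (Fin.forall_fin_two.2 ⟨h0, by exact_mod_cast hsum⟩)
    _ ≤ 2 * maxDivisors (N ^ 4) := card_int_divisors_le <| by
        rw [Int.natAbs_pow, Int.natAbs_natCast, show 4 = 2 * 2 from rfl, pow_mul]
        exact Nat.pow_le_pow_left hden 2

lemma card_reciprocalSols_fin_succ_le (k N : ℕ) (t : ℚ) :
    #(reciprocalSols (Fin (k + 1)) N t) ≤
      ∑ x ∈ nonzeroBox N, #(reciprocalSols (Fin k) N (t - (x : ℚ)⁻¹)) := by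
  have hsub : reciprocalSols (Fin (k + 1)) N t ⊆ (nonzeroBox N).biUnion fun x =>
      (reciprocalSols (Fin k) N (t - (x : ℚ)⁻¹)).image (Fin.cons x) := by
    intro a ha
    obtain ⟨hbox, hsum⟩ := mem_reciprocalSols.1 ha
    rw [Fin.sum_univ_succ, ← eq_sub_iff_add_eq'] at hsum
    exact mem_biUnion.2 ⟨a 0, hbox 0, mem_image.2
      ⟨Fin.tail a, mem_reciprocalSols.2 ⟨fun i => hbox i.succ, hsum⟩, Fin.cons_self_tail a⟩⟩
  exact (card_le_card hsub).trans (card_biUnion_le.trans (sum_le_sum fun _ _ => card_image_le))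

lemma card_reciprocalSols_congr {κ : Type*} [Fintype κ] [DecidableEq κ] (e : ι ≃ κ) (N : ℕ)
    (t : ℚ) : #(reciprocalSols ι N t) = #(reciprocalSols κ N t) := by
  refine card_equiv (e.arrowCongr (Equiv.refl ℤ)) fun a => ?_
  simp only [mem_reciprocalSols, Equiv.arrowCongr_apply, Equiv.coe_refl, Function.comp_apply, id,
    e.symm.forall_congr_left, Equiv.symm_symm, e.symm.sum_comp fun i => (a i : ℚ)⁻¹]
  simp

lemma card_reciprocalSols_fin_three_zero_le (N : ℕ) :
    #(reciprocalSols (Fin 3) N 0) ≤ 2 * N * (2 * maxDivisors (N ^ 4)) := by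
  calc #(reciprocalSols (Fin 3) N 0)
      ≤ ∑ x ∈ nonzeroBox N, #(reciprocalSols (Fin 2) N (0 - (x : ℚ)⁻¹)) :=
        card_reciprocalSols_fin_succ_le 2 N 0
    _ ≤ #(nonzeroBox N) * (2 * maxDivisors (N ^ 4)) :=
        sum_le_card_nsmul _ _ _ fun x hx => card_reciprocalSols_fin_two_le N <| by
          simpa using (mem_nonzeroBox.1 hx).1
    _ = 2 * N * (2 * maxDivisors (N ^ 4)) := by rw [card_nonzeroBox]

variable (ι) in
theorem card_reciprocalSols_le_of_card_eq_three (hι : Fintype.card ι = 3) (hN : 0 < N) (t : ℚ) :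
    #(reciprocalSols ι N t) ≤ (2 * maxDivisors (N ^ 4)) ^ 5 * N := by
  set T := maxDivisors (N ^ 4)
  have hT : 0 < T := maxDivisors_pos (pow_pos hN 4)
  rcases eq_or_ne t 0 with rfl | ht
  · calc #(reciprocalSols ι N 0) = #(reciprocalSols (Fin 3) N 0) :=
          card_reciprocalSols_congr (Fintype.equivFinOfCardEq hι) N 0
      _ ≤ 2 * N * (2 * T) := card_reciprocalSols_fin_three_zero_le N
      _ ≤ 2 * T * N * (2 * T) := by gcongr; omega
      _ = (2 * T) ^ 2 * N := by ring
      _ ≤ (2 * T) ^ 5 * N := by gcongr <;> omega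
  · have hsqrt : (3 * N ^ 2).sqrt ≤ 2 * N := by
      calc (3 * N ^ 2).sqrt ≤ ((2 * N) ^ 2).sqrt :=
            Nat.sqrt_le_sqrt (by rw [mul_pow]; exact Nat.mul_le_mul_right _ (by norm_num))
        _ = 2 * N := Nat.sqrt_eq' _
    have hmono : maxDivisors (N ^ 3) ≤ T :=
      maxDivisors_mono (Nat.pow_le_pow_right hN (Nat.le_succ 3))
    calc #(reciprocalSols ι N t) ≤ (2 * maxDivisors (N ^ 3)) ^ 4 * (3 * N ^ 2).sqrt := by
          simpa only [hι] using card_reciprocalSols_le_of_ne_zero ι N ht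
      _ ≤ (2 * T) ^ 4 * (2 * N) := by gcongr
      _ ≤ (2 * T) ^ 4 * (2 * T * N) := by gcongr; omega
      _ = (2 * T) ^ 5 * N := by ring

end ReciprocalSums

section ReciprocalMatrices

variable {ι : Type*} [LinearOrder ι]

variable (ι) in
/-- The pairs `(i, j)` with `i < j`: the positions above the diagonal of a square matrix. -/
abbrev OrderedPair : Type _ := {p : ι × ι // p.1 < p.2}

variable [Fintype ι]

lemma sum_sum_eq_sum_diag_add_two_mul_sum_orderedPair {R : Type*} [NonAssocSemiring R]
    {g : ι → ι → R} (hg : ∀ i j, g i j = g j i) :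
    ∑ i, ∑ j, g i j = ∑ i, g i i + 2 * ∑ p : OrderedPair ι, g p.1.1 p.1.2 := by
  have hdiag : ∑ i, g i i = ∑ i, ∑ j, if i = j then g i j else 0 := by simp
  have hupper : ∑ p : OrderedPair ι, g p.1.1 p.1.2 = ∑ i, ∑ j, if i < j then g i j else 0 := by
    rw [← Fintype.sum_prod_type' (f := fun i j => if i < j then g i j else 0), ← sum_filter]
    exact (sum_subtype _ (by simp) fun p : ι × ι => g p.1 p.2).symm
  have hlower : ∑ p : OrderedPair ι, g p.1.1 p.1.2 = ∑ i, ∑ j, if j < i then g i j else 0 := by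
    rw [hupper, sum_comm]
    simp only [hg]
  rw [two_mul]
  nth_rw 1 [hupper]
  rw [hlower, hdiag]
  simp only [← sum_add_distrib]
  refine sum_congr rfl fun i _ => sum_congr rfl fun j _ => ?_
  rcases lt_trichotomy i j with h | rfl | h
  · simp [h, h.ne, h.not_gt]
  · simp
  · simp [h, h.ne', h.not_gt]

variable (ι) in
lemma card_add_two_mul_card_orderedPair :
    Fintype.card ι + 2 * Fintype.card (OrderedPair ι) = Fintype.card ι ^ 2 := by
  have h := sum_sum_eq_sum_diag_add_two_mul_sum_orderedPair (ι := ι) (g := fun _ _ => 1)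
    fun _ _ => rfl
  simpa [sq] using h.symm

variable (ι) in
/-- The matrices of nonzero integers `a i j`, of absolute value at most `N`, for which the matrix
of reciprocals `1 / a i j` has trace `t` and its square has trace `s`. -/
noncomputable def reciprocalMatrices (N : ℕ) (t s : ℚ) : Finset (Matrix ι ι ℤ) :=
  {a ∈ Fintype.piFinset fun _ => Fintype.piFinset fun _ => nonzeroBox N |
    ∑ i, (a i i : ℚ)⁻¹ = t ∧ ∑ i, ∑ j, (a i j : ℚ)⁻¹ * (a j i : ℚ)⁻¹ = s}

/-- The products of the pairs of entries of a matrix that are symmetric about the diagonal. -/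
def mirrorProducts (a : Matrix ι ι ℤ) : OrderedPair ι → ℤ := fun p => a p.1.1 p.1.2 * a p.1.2 p.1.1

variable {N : ℕ} {t s : ℚ} {a : Matrix ι ι ℤ}

lemma mem_reciprocalMatrices :
    a ∈ reciprocalMatrices ι N t s ↔ (∀ i j, a i j ∈ nonzeroBox N) ∧
      ∑ i, (a i i : ℚ)⁻¹ = t ∧ ∑ i, ∑ j, (a i j : ℚ)⁻¹ * (a j i : ℚ)⁻¹ = s :=
  mem_filter.trans <| and_congr_left' <|
    Fintype.mem_piFinset.trans <| forall_congr' fun _ => Fintype.mem_piFinset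

lemma diag_mem_reciprocalSols (ha : a ∈ reciprocalMatrices ι N t s) :
    a.diag ∈ reciprocalSols ι N t :=
  mem_reciprocalSols.2 ⟨fun i => (mem_reciprocalMatrices.1 ha).1 i i,
    (mem_reciprocalMatrices.1 ha).2.1⟩

lemma mirrorProducts_mem_reciprocalSols (ha : a ∈ reciprocalMatrices ι N t s) :
    mirrorProducts a ∈
      reciprocalSols (OrderedPair ι) (N ^ 2) ((s - ∑ i, (a.diag i : ℚ)⁻¹ ^ 2) / 2) := by
  obtain ⟨hbox, -, hs⟩ := mem_reciprocalMatrices.1 ha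
  refine mem_reciprocalSols.2 ⟨fun p => sq N ▸ mul_mem_nonzeroBox (hbox _ _) (hbox _ _), ?_⟩
  rw [sum_sum_eq_sum_diag_add_two_mul_sum_orderedPair fun i j => mul_comm _ _] at hs
  simp only [mirrorProducts, Int.cast_mul, mul_inv, Matrix.diag_apply, sq]
  linear_combination hs / 2

lemma card_diag_mirrorProducts_fiber_le {v : OrderedPair ι → ℤ} {L : ℕ} (hv : ∀ p, v p ≠ 0)
    (hL : ∀ p, (v p).natAbs ≤ L) (S : Finset (Matrix ι ι ℤ)) (u : ι → ℤ) :
    #{a ∈ S | a.diag = u ∧ mirrorProducts a = v} ≤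
      (2 * maxDivisors L) ^ Fintype.card (OrderedPair ι) := by
  calc #{a ∈ S | a.diag = u ∧ mirrorProducts a = v}
      ≤ #(Fintype.piFinset fun p => (v p).divisorsAntidiag) := by
        refine card_le_card_of_injOn (fun a p => (a p.1.1 p.1.2, a p.1.2 p.1.1)) (fun a ha => ?_)
          fun a ha b hb hab => ?_
        · obtain ⟨-, -, hav⟩ := mem_filter.1 ha
          exact Fintype.mem_piFinset.2 fun p => Int.mem_divisorsAntidiag.2 ⟨congrFun hav p, hv p⟩
        · have hdiag : a.diag = b.diag := (mem_filter.1 ha).2.1.trans (mem_filter.1 hb).2.1.symm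
          have hpair : ∀ i j, i < j → a i j = b i j ∧ a j i = b j i := fun i j hij =>
            Prod.ext_iff.1 (congrFun hab ⟨(i, j), hij⟩)
          ext i j
          rcases lt_trichotomy i j with h | rfl | h
          · exact (hpair i j h).1
          · exact congrFun hdiag i
          · exact (hpair j i h).2
    _ ≤ (2 * maxDivisors L) ^ Fintype.card (OrderedPair ι) := by
        rw [Fintype.card_piFinset]
        exact prod_le_pow_card _ _ _ fun p _ => card_int_divisorsAntidiag_le (hL p)

theorem card_reciprocalMatrices_le_of_forall {B₁ B₂ : ℕ} (s : ℚ)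
    (h₁ : #(reciprocalSols ι N t) ≤ B₁)
    (h₂ : ∀ r, #(reciprocalSols (OrderedPair ι) (N ^ 2) r) ≤ B₂) :
    #(reciprocalMatrices ι N t s) ≤
      (2 * maxDivisors (N ^ 2)) ^ Fintype.card (OrderedPair ι) * B₂ * B₁ := by
  set F := (2 * maxDivisors (N ^ 2)) ^ Fintype.card (OrderedPair ι)
  have hfiber : ∀ u ∈ reciprocalSols ι N t,
      #{a ∈ reciprocalMatrices ι N t s | a.diag = u} ≤ F * B₂ := fun u _ => by
    refine (card_le_mul_card_image_of_maps_to (f := mirrorProducts)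
      (t := reciprocalSols (OrderedPair ι) (N ^ 2) ((s - ∑ i, (u i : ℚ)⁻¹ ^ 2) / 2))
      (fun a ha => ?_) F fun v hv => ?_).trans (Nat.mul_le_mul_left F (h₂ _))
    · obtain ⟨ha', rfl⟩ := mem_filter.1 ha
      exact mirrorProducts_mem_reciprocalSols ha'
    · rw [filter_filter]
      exact card_diag_mirrorProducts_fiber_le (ne_zero_of_mem_reciprocalSols hv)
        (natAbs_le_of_mem_reciprocalSols hv) _ u
  exact (card_le_mul_card_image_of_maps_to (fun a ha => diag_mem_reciprocalSols ha) _ hfiber).trans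
    (Nat.mul_le_mul_left _ h₁)

/-- A common bound, for `N ≥ 1`, for the number of integer divisors of any of the nonzero integers
whose factorizations are counted for `m × m` matrices with entries of size at most `N`. -/
def matrixDivisors (m N : ℕ) : ℕ := 2 * maxDivisors (N ^ (2 * (m ^ 2 + 1)))

lemma two_mul_maxDivisors_pow_le_matrixDivisors {k m : ℕ} (hN : 0 < N) (hk : k ≤ 2 * (m ^ 2 + 1)) :
    2 * maxDivisors (N ^ k) ≤ matrixDivisors m N :=
  Nat.mul_le_mul_left 2 (maxDivisors_mono (Nat.pow_le_pow_right hN hk))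

lemma matrixDivisors_pos (m : ℕ) (hN : 0 < N) : 0 < matrixDivisors m N :=
  Nat.mul_pos two_pos (maxDivisors_pos (pow_pos hN _))

variable (ι) in
lemma card_reciprocalSols_orderedPair_sq_le (hN : 0 < N) (r : ℚ) :
    #(reciprocalSols (OrderedPair ι) (N ^ 2) r) ≤
      matrixDivisors (Fintype.card ι) N ^ (Fintype.card (OrderedPair ι) + 1) *
        N ^ Fintype.card (OrderedPair ι) := by
  have hp := card_add_two_mul_card_orderedPair ι
  have h := card_reciprocalSols_le (OrderedPair ι) (N ^ 2) r
  rw [pow_right_comm, Nat.sqrt_eq', ← pow_mul] at h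
  refine h.trans (Nat.mul_le_mul_right _ (Nat.pow_le_pow_left ?_ _))
  exact two_mul_maxDivisors_pow_le_matrixDivisors hN (by omega)

lemma card_reciprocalMatrices_le_of_card_reciprocalSols_le {X : ℕ} (hN : 0 < N) (s : ℚ)
    (h : #(reciprocalSols ι N t) ≤
      (2 * maxDivisors (N ^ Fintype.card ι)) ^ (Fintype.card ι + 1) * X) :
    #(reciprocalMatrices ι N t s) ≤ matrixDivisors (Fintype.card ι) N ^ (Fintype.card ι ^ 2 + 2) *
      (N ^ Fintype.card (OrderedPair ι) * X) := by
  have hp := card_add_two_mul_card_orderedPair ι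
  set m := Fintype.card ι
  set p := Fintype.card (OrderedPair ι)
  set T := matrixDivisors m N
  have hm : m ≤ 2 * (m ^ 2 + 1) := by nlinarith
  calc #(reciprocalMatrices ι N t s)
      ≤ (2 * maxDivisors (N ^ 2)) ^ p * (T ^ (p + 1) * N ^ p) *
          ((2 * maxDivisors (N ^ m)) ^ (m + 1) * X) :=
        card_reciprocalMatrices_le_of_forall s h (card_reciprocalSols_orderedPair_sq_le ι hN)
    _ ≤ T ^ p * (T ^ (p + 1) * N ^ p) * (T ^ (m + 1) * X) := by
        gcongr
        · exact two_mul_maxDivisors_pow_le_matrixDivisors hN (by omega)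
        · exact two_mul_maxDivisors_pow_le_matrixDivisors hN hm
    _ = T ^ (m ^ 2 + 2) * (N ^ p * X) := by
        rw [← hp]
        ring

variable (ι) in
lemma card_reciprocalMatrices_le_of_card_eq_three (hι : Fintype.card ι = 3) (hN : 0 < N)
    (t s : ℚ) : #(reciprocalMatrices ι N t s) ≤ matrixDivisors 3 N ^ 13 * N ^ 3 := by
  have hp : Fintype.card (OrderedPair ι) = 3 := by
    have h := card_add_two_mul_card_orderedPair ι
    rw [hι] at h
    omega
  set T := matrixDivisors 3 N
  have hT : ∀ k ≤ 20, 2 * maxDivisors (N ^ k) ≤ T := fun _ hk =>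
    two_mul_maxDivisors_pow_le_matrixDivisors hN (hk.trans (by norm_num))
  have hN2 : 0 < N ^ 2 := pow_pos hN 2
  calc #(reciprocalMatrices ι N t s)
      ≤ (2 * maxDivisors (N ^ 2)) ^ 3 * ((2 * maxDivisors ((N ^ 2) ^ 4)) ^ 5 * N ^ 2) *
          ((2 * maxDivisors (N ^ 4)) ^ 5 * N) :=
        hp ▸ card_reciprocalMatrices_le_of_forall s
          (card_reciprocalSols_le_of_card_eq_three ι hι hN t)
          (card_reciprocalSols_le_of_card_eq_three (OrderedPair ι) hp hN2)
    _ ≤ T ^ 3 * (T ^ 5 * N ^ 2) * (T ^ 5 * N) := by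
        rw [← pow_mul N 2 4]
        gcongr <;> exact hT _ (by norm_num)
    _ = T ^ 13 * N ^ 3 := by ring

lemma card_reciprocalMatrices_fin_two_le_of_trace_ne_zero (hN : 0 < N) (ht : t ≠ 0) (s : ℚ) :
    #(reciprocalMatrices (Fin 2) N t s) ≤ matrixDivisors 2 N ^ 2 := by
  have hp : Fintype.card (OrderedPair (Fin 2)) = 1 := rfl
  have : Subsingleton (OrderedPair (Fin 2)) := Fintype.card_le_one_iff_subsingleton.1 hp.le
  calc #(reciprocalMatrices (Fin 2) N t s)
      ≤ (2 * maxDivisors (N ^ 2)) ^ 1 * 1 * (2 * maxDivisors (N ^ 4)) :=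
        card_reciprocalMatrices_le_of_forall s (card_reciprocalSols_fin_two_le N ht)
          (card_reciprocalSols_le_one (OrderedPair (Fin 2)) (N ^ 2))
    _ ≤ matrixDivisors 2 N ^ 1 * 1 * matrixDivisors 2 N := by
        gcongr <;> exact two_mul_maxDivisors_pow_le_matrixDivisors hN (by norm_num)
    _ = matrixDivisors 2 N ^ 2 := by ring

-- Trace zero means `a 1 1 = -a 0 0`, so the square has trace `2 (1 / (a 0 0) ^ 2 + 1 / (b c))`
-- where `b` and `c` are the off-diagonal entries.
lemma factors_mem_reciprocalSols_of_trace_zero {a : Matrix (Fin 2) (Fin 2) ℤ}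
    (ha : a ∈ reciprocalMatrices (Fin 2) N 0 s) :
    ![a 0 0 * -a 1 1, a 0 1 * a 1 0] ∈ reciprocalSols (Fin 2) (N ^ 2) (s / 2) := by
  obtain ⟨hbox, ht, hs⟩ := mem_reciprocalMatrices.1 ha
  refine mem_reciprocalSols.2 ⟨Fin.forall_fin_two.2 ⟨?_, ?_⟩, ?_⟩
  · have hneg : -a 1 1 ∈ nonzeroBox N := by simpa [mem_nonzeroBox] using hbox 1 1
    exact sq N ▸ mul_mem_nonzeroBox (hbox 0 0) hneg
  · exact sq N ▸ mul_mem_nonzeroBox (hbox 0 1) (hbox 1 0)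
  · simp only [Fin.sum_univ_two, Matrix.cons_val_zero, Matrix.cons_val_one, Int.cast_mul,
      Int.cast_neg, mul_inv, inv_neg] at ht hs ⊢
    linear_combination hs / 2 - ((a 0 0 : ℚ)⁻¹ + (a 1 1 : ℚ)⁻¹) / 2 * ht

lemma card_factors_fiber_le {v : Fin 2 → ℤ} {L : ℕ} (hv : ∀ i, v i ≠ 0)
    (hL : ∀ i, (v i).natAbs ≤ L) (S : Finset (Matrix (Fin 2) (Fin 2) ℤ)) :
    #{a ∈ S | ![a 0 0 * -a 1 1, a 0 1 * a 1 0] = v} ≤ (2 * maxDivisors L) ^ 2 := by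
  calc #{a ∈ S | ![a 0 0 * -a 1 1, a 0 1 * a 1 0] = v}
      ≤ #((v 0).divisorsAntidiag ×ˢ (v 1).divisorsAntidiag) := by
        refine card_le_card_of_injOn (fun a => ((a 0 0, -a 1 1), (a 0 1, a 1 0))) (fun a ha => ?_)
          fun a _ b _ hab => ?_
        · obtain ⟨-, hav⟩ := mem_filter.1 ha
          exact mem_product.2 ⟨Int.mem_divisorsAntidiag.2 ⟨congrFun hav 0, hv 0⟩,
            Int.mem_divisorsAntidiag.2 ⟨congrFun hav 1, hv 1⟩⟩
        · simp only [Prod.mk.injEq, neg_inj] at hab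
          exact Matrix.ext (Fin.forall_fin_two.2 ⟨Fin.forall_fin_two.2 ⟨hab.1.1, hab.2.1⟩,
            Fin.forall_fin_two.2 ⟨hab.2.2, hab.1.2⟩⟩)
    _ ≤ (2 * maxDivisors L) ^ 2 := by
        rw [card_product, sq]
        exact Nat.mul_le_mul (card_int_divisorsAntidiag_le (hL 0))
          (card_int_divisorsAntidiag_le (hL 1))

lemma card_reciprocalMatrices_fin_two_le_of_trace_zero (hN : 0 < N) (hs : s ≠ 0) :
    #(reciprocalMatrices (Fin 2) N 0 s) ≤ matrixDivisors 2 N ^ 3 := by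
  calc #(reciprocalMatrices (Fin 2) N 0 s)
      ≤ (2 * maxDivisors (N ^ 2)) ^ 2 * #(reciprocalSols (Fin 2) (N ^ 2) (s / 2)) :=
        card_le_mul_card_image_of_maps_to
          (fun a ha => factors_mem_reciprocalSols_of_trace_zero ha) _
          fun v hv => card_factors_fiber_le (ne_zero_of_mem_reciprocalSols hv)
            (natAbs_le_of_mem_reciprocalSols hv) _
    _ ≤ (2 * maxDivisors (N ^ 2)) ^ 2 * (2 * maxDivisors ((N ^ 2) ^ 4)) := by
        gcongr
        exact card_reciprocalSols_fin_two_le (N ^ 2) (div_ne_zero hs two_ne_zero)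
    _ ≤ matrixDivisors 2 N ^ 2 * matrixDivisors 2 N := by
        rw [← pow_mul N 2 4]
        gcongr <;> exact two_mul_maxDivisors_pow_le_matrixDivisors hN (by norm_num)
    _ = matrixDivisors 2 N ^ 3 := by ring

end ReciprocalMatrices

section GrowthRates

/-- The factor lost to the divisor bound and to constants in the counts of `m × m` matrices. -/
def divisorLoss (m N : ℕ) : ℕ := (m + 1) * matrixDivisors m N ^ (m ^ 2 + 4)

variable {N : ℕ}

lemma matrixDivisors_pow_le_divisorLoss {m k : ℕ} (hN : 0 < N) (hk : k ≤ m ^ 2 + 4) :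
    matrixDivisors m N ^ k ≤ divisorLoss m N :=
  (Nat.pow_le_pow_right (matrixDivisors_pos m hN) hk).trans
    (Nat.le_mul_of_pos_left _ m.succ_pos)

lemma exists_divisorLoss_le_mul_rpow (m : ℕ) {ε : ℝ} (hε : 0 < ε) :
    ∃ C : ℝ, 0 ≤ C ∧ ∀ N : ℕ, (divisorLoss m N : ℝ) ≤ C * (N : ℝ) ^ ε := by
  set e := 2 * (m ^ 2 + 1)
  set k := m ^ 2 + 4
  have he : (e : ℝ) ≠ 0 := by positivity
  have hk : (k : ℝ) ≠ 0 := by positivity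
  obtain ⟨C, hC0, hC⟩ := exists_maxDivisors_le_mul_rpow (ε := ε / (e * k)) (by positivity)
  refine ⟨(m + 1) * (2 * C) ^ k, by positivity, fun N => ?_⟩
  have hrpow : (((N : ℝ) ^ e) ^ (ε / (e * k))) ^ k = (N : ℝ) ^ ε := by
    rw [← Real.rpow_natCast, ← Real.rpow_natCast, ← Real.rpow_mul N.cast_nonneg,
      ← Real.rpow_mul N.cast_nonneg]
    congr 1
    field_simp
  calc (divisorLoss m N : ℝ) = (m + 1) * (2 * maxDivisors (N ^ e)) ^ k := by
        rw [divisorLoss, matrixDivisors]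
        push_cast
        rfl
    _ ≤ (m + 1) * (2 * (C * ((N : ℝ) ^ e) ^ (ε / (e * k)))) ^ k := by
        gcongr
        exact_mod_cast hC (N ^ e)
    _ = (m + 1) * (2 * C) ^ k * (N : ℝ) ^ ε := by
        rw [← mul_assoc, mul_pow, hrpow, mul_assoc]

lemma natCast_sqrt_mul_pow_le (c N k : ℕ) :
    ((c * N ^ k).sqrt : ℝ) ≤ c * (N : ℝ) ^ ((k : ℝ) / 2) := by
  have hc : √(c : ℝ) ≤ c :=
    Real.sqrt_le_iff.2 ⟨c.cast_nonneg, by exact_mod_cast Nat.le_self_pow two_ne_zero c⟩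
  calc ((c * N ^ k).sqrt : ℝ) ≤ √((c * N ^ k : ℕ) : ℝ) := Real.nat_sqrt_le_real_sqrt
    _ = √(c : ℝ) * (N : ℝ) ^ ((k : ℝ) / 2) := by
        rw [Nat.cast_mul, Real.sqrt_mul c.cast_nonneg, Real.sqrt_eq_rpow ((N ^ k : ℕ) : ℝ),
          Nat.cast_pow, ← Real.rpow_natCast_mul N.cast_nonneg, mul_one_div]
    _ ≤ c * (N : ℝ) ^ ((k : ℝ) / 2) := by gcongr

variable {ι : Type*} [LinearOrder ι] [Fintype ι]

lemma natCast_card_reciprocalMatrices_le {t : ℚ} {c k : ℕ} (hN : 0 < N)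
    (hc : c ≤ Fintype.card ι + 1)
    (h : #(reciprocalSols ι N t) ≤
      (2 * maxDivisors (N ^ Fintype.card ι)) ^ (Fintype.card ι + 1) * (c * N ^ k).sqrt) (s : ℚ) :
    (#(reciprocalMatrices ι N t s) : ℝ) ≤ divisorLoss (Fintype.card ι) N *
      (N : ℝ) ^ (((Fintype.card ι : ℝ) ^ 2 - Fintype.card ι + k) / 2) := by
  have hp : (Fintype.card ι : ℝ) + 2 * Fintype.card (OrderedPair ι) = Fintype.card ι ^ 2 := by
    exact_mod_cast card_add_two_mul_card_orderedPair ι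
  have hcard := card_reciprocalMatrices_le_of_card_reciprocalSols_le hN s h
  have hN' : (0 : ℝ) < N := by exact_mod_cast hN
  set m := Fintype.card ι
  set p := Fintype.card (OrderedPair ι)
  set T := matrixDivisors m N
  have hexp : (p : ℝ) + (k : ℝ) / 2 = ((m : ℝ) ^ 2 - m + k) / 2 := by linarith
  calc (#(reciprocalMatrices ι N t s) : ℝ)
      ≤ T ^ (m ^ 2 + 2) * ((N : ℝ) ^ p * (c * N ^ k).sqrt) := by exact_mod_cast hcard
    _ ≤ T ^ (m ^ 2 + 4) * ((N : ℝ) ^ p * ((m + 1 : ℕ) * (N : ℝ) ^ ((k : ℝ) / 2))) := by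
        gcongr
        · exact_mod_cast matrixDivisors_pos m hN
        · norm_num
        · exact (natCast_sqrt_mul_pow_le c N k).trans (by gcongr)
    _ = divisorLoss m N * (N : ℝ) ^ (((m : ℝ) ^ 2 - m + k) / 2) := by
        rw [← hexp, Real.rpow_add hN', Real.rpow_natCast, divisorLoss]
        push_cast
        ring

lemma natCast_card_reciprocalMatrices_le_rpow (hN : 0 < N) (t s : ℚ) :
    (#(reciprocalMatrices ι N t s) : ℝ) ≤
      divisorLoss (Fintype.card ι) N * (N : ℝ) ^ ((Fintype.card ι : ℝ) ^ 2 / 2) := by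
  have h := natCast_card_reciprocalMatrices_le (c := 1) (k := Fintype.card ι) hN (by omega)
    (by simpa only [one_mul] using card_reciprocalSols_le ι N t) s
  rwa [sub_add_cancel] at h

lemma natCast_card_reciprocalMatrices_le_rpow_of_trace_ne_zero [Nonempty ι] (hN : 0 < N) {t : ℚ}
    (ht : t ≠ 0) (s : ℚ) :
    (#(reciprocalMatrices ι N t s) : ℝ) ≤
      divisorLoss (Fintype.card ι) N * (N : ℝ) ^ (((Fintype.card ι : ℝ) ^ 2 - 1) / 2) := by
  have h := natCast_card_reciprocalMatrices_le hN (Nat.le_succ _)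
    (card_reciprocalSols_le_of_ne_zero ι N ht) s
  rwa [Nat.cast_pred Fintype.card_pos, sub_add_sub_cancel] at h

lemma natCast_card_reciprocalMatrices_le_of_card_eq_three (hι : Fintype.card ι = 3) (hN : 0 < N)
    (t s : ℚ) : (#(reciprocalMatrices ι N t s) : ℝ) ≤ divisorLoss 3 N * (N : ℝ) ^ (3 : ℝ) := by
  have h := (card_reciprocalMatrices_le_of_card_eq_three ι hι hN t s).trans
    (Nat.mul_le_mul_right _ (matrixDivisors_pow_le_divisorLoss hN (by norm_num)))
  exact_mod_cast h

lemma card_reciprocalMatrices_fin_two_le {t s : ℚ} (hN : 0 < N) (hts : t ≠ 0 ∨ s ≠ 0) :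
    #(reciprocalMatrices (Fin 2) N t s) ≤ divisorLoss 2 N := by
  rcases eq_or_ne t 0 with rfl | ht
  · exact (card_reciprocalMatrices_fin_two_le_of_trace_zero hN (hts.resolve_left (· rfl))).trans
      (matrixDivisors_pow_le_divisorLoss hN (by norm_num))
  · exact (card_reciprocalMatrices_fin_two_le_of_trace_ne_zero hN ht s).trans
      (matrixDivisors_pow_le_divisorLoss hN (by norm_num))

end GrowthRates

section EgyptianMatrices

variable {ι : Type*} [LinearOrder ι] [Fintype ι]

variable (ι) in
/-- The matrices of Egyptian fractions of height at most `H` with trace `t` whose square has trace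
`s`. -/
def egyptianMatrices (H : ℝ) (t s : ℚ) : Set (Matrix ι ι ℚ) :=
  {A | (∀ i j, A i j ∈ Egyptian H) ∧ A.trace = t ∧ (A ^ 2).trace = s}

lemma exists_mem_nonzeroBox_of_mem_egyptian {H : ℝ} {x : ℚ} (hx : x ∈ Egyptian H) :
    ∃ z ∈ nonzeroBox ⌊H⌋₊, (z : ℚ)⁻¹ = x := by
  obtain ⟨z, hz, hzH, rfl⟩ := hx
  refine ⟨z, mem_nonzeroBox.2 ⟨hz, Nat.le_floor ?_⟩, (one_div _).symm⟩
  rw [Nat.cast_natAbs]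
  exact_mod_cast hzH

variable {H : ℝ} {t s : ℚ}

lemma egyptianMatrices_subset_image :
    egyptianMatrices ι H t s ⊆
      (fun a : Matrix ι ι ℤ => a.map fun z => (z : ℚ)⁻¹) '' reciprocalMatrices ι ⌊H⌋₊ t s := by
  rintro A ⟨hA, htrace, hsquare⟩
  choose a hbox ha using fun i j => exists_mem_nonzeroBox_of_mem_egyptian (hA i j)
  simp only [Matrix.trace, Matrix.diag_apply, sq, Matrix.mul_apply, ← ha] at htrace hsquare
  exact ⟨a, mem_reciprocalMatrices.2 ⟨hbox, htrace, hsquare⟩, Matrix.ext ha⟩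

lemma finite_egyptianMatrices : (egyptianMatrices ι H t s).Finite :=
  ((finite_toSet _).image _).subset egyptianMatrices_subset_image

lemma ncard_egyptianMatrices_le :
    (egyptianMatrices ι H t s).ncard ≤ #(reciprocalMatrices ι ⌊H⌋₊ t s) := by
  rw [← Set.ncard_coe_finset]
  exact (Set.ncard_le_ncard egyptianMatrices_subset_image ((finite_toSet _).image _)).trans
    (Set.ncard_image_le (finite_toSet _))

lemma ncard_egyptianMatrices_le_mul_rpow {L : ℕ → ℕ} {C ε α : ℝ} (hC0 : 0 ≤ C)
    (hC : ∀ N, (L N : ℝ) ≤ C * (N : ℝ) ^ ε) (hα : 0 ≤ α + ε) (hH : 1 ≤ H)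
    (hcard : (#(reciprocalMatrices ι ⌊H⌋₊ t s) : ℝ) ≤ L ⌊H⌋₊ * (⌊H⌋₊ : ℝ) ^ α) :
    ((egyptianMatrices ι H t s).ncard : ℝ) ≤ C * H ^ (α + ε) := by
  have hpos : (0 : ℝ) < ⌊H⌋₊ := by exact_mod_cast Nat.floor_pos.2 hH
  calc ((egyptianMatrices ι H t s).ncard : ℝ) ≤ #(reciprocalMatrices ι ⌊H⌋₊ t s) := by
        exact_mod_cast ncard_egyptianMatrices_le
    _ ≤ C * (⌊H⌋₊ : ℝ) ^ ε * (⌊H⌋₊ : ℝ) ^ α := hcard.trans (by gcongr; exact hC _)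
    _ = C * (⌊H⌋₊ : ℝ) ^ (α + ε) := by rw [add_comm, Real.rpow_add hpos, mul_assoc]
    _ ≤ C * H ^ (α + ε) := by
        gcongr
        exact Nat.floor_le (zero_le_one.trans hH)

end EgyptianMatrices

section TraceOfSquare

variable {R ι : Type*} [CommRing R] [Fintype ι] [DecidableEq ι]

lemma aeval_charpolyRev {S : Type*} [CommRing S] [Algebra R S] (x : S) (A : Matrix ι ι R) :
    aeval x A.charpolyRev = (1 - x • A.map (algebraMap R S)).det := by
  rw [Matrix.charpolyRev, AlgHom.map_det, map_sub, map_one]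
  congr 2
  ext i j
  simp [mul_comm x]

-- `(1 - X A) (1 + X A) = 1 - X² A²`
lemma charpolyRev_mul_charpolyRev_comp_neg_X (A : Matrix ι ι R) :
    A.charpolyRev * A.charpolyRev.comp (-X) = expand R 2 (A ^ 2).charpolyRev := by
  have hpow : (A ^ 2).map C = A.map C ^ 2 := Matrix.map_pow A C 2
  rw [expand_eq_comp_X_pow, comp_eq_aeval, comp_eq_aeval, aeval_charpolyRev, aeval_charpolyRev,
    Matrix.charpolyRev, ← Matrix.det_mul, algebraMap_eq, hpow, ← _root_.smul_pow,
    neg_smul, sub_neg_eq_add, sq, ← (Commute.one_left _).mul_self_sub_mul_self_eq', one_mul]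

lemma trace_sq_eq_coeff_reverse_charpoly (A : Matrix ι ι R) :
    (A ^ 2).trace = A.trace ^ 2 - 2 * A.charpoly.reverse.coeff 2 := by
  have hzero : A.charpolyRev.coeff 0 = 1 := by
    rw [coeff_zero_eq_eval_zero, Matrix.eval_charpolyRev]
  have hneg (k : ℕ) : (A.charpolyRev.comp (-X)).coeff k = A.charpolyRev.coeff k * (-1) ^ k := by
    rw [← comp_C_mul_X_coeff, C_neg, C_1, neg_one_mul]
  have hprod : (A.charpolyRev * A.charpolyRev.comp (-X)).coeff 2 =
      2 * A.charpolyRev.coeff 2 - A.trace ^ 2 := by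
    rw [coeff_mul, Nat.sum_antidiagonal_eq_sum_range_succ_mk, sum_range_succ, sum_range_succ,
      sum_range_one, hneg, hneg, hneg, hzero, Matrix.coeff_charpolyRev_eq_neg_trace]
    ring
  have hexpand : (expand R 2 (A ^ 2).charpolyRev).coeff 2 = -(A ^ 2).trace := by
    rw [← Matrix.coeff_charpolyRev_eq_neg_trace]
    exact coeff_expand_mul two_pos _ 1
  rw [charpolyRev_mul_charpolyRev_comp_neg_X, hexpand] at hprod
  rw [Matrix.reverse_charpoly]
  linear_combination -hprod

end TraceOfSquare

section CharpolyFibres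

lemma ncard_setOf_charpoly_eq_le {ι : Type*} [LinearOrder ι] [Fintype ι] (H : ℝ) (f : ℚ[X]) :
    {A : Matrix ι ι ℚ | (∀ i j, A i j ∈ Egyptian H) ∧ A.charpoly = f}.ncard ≤
      (egyptianMatrices ι H (-f.nextCoeff) (f.nextCoeff ^ 2 - 2 * f.reverse.coeff 2)).ncard := by
  refine Set.ncard_le_ncard ?_ finite_egyptianMatrices
  rintro A ⟨hA, rfl⟩
  rw [← neg_sq, ← Matrix.trace_eq_neg_charpoly_nextCoeff]
  exact ⟨hA, rfl, trace_sq_eq_coeff_reverse_charpoly A⟩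

lemma eq_X_sq_of_coeff_eq_zero {R : Type*} [Semiring R] [Nontrivial R] {f : R[X]}
    (hf : f.IsMonicOfDegree 2) (hnext : f.nextCoeff = 0) (hrev : f.reverse.coeff 2 = 0) :
    f = X ^ 2 := by
  have hdeg := hf.natDegree_eq
  obtain ⟨a, b, rfl⟩ := isMonicOfDegree_two_iff.1 hf
  rw [nextCoeff_of_natDegree_pos (by omega), hdeg] at hnext
  rw [coeff_reverse, hdeg] at hrev
  have ha : a = 0 := by simpa using hnext
  have hb : b = 0 := by simpa using hrev
  rw [ha, hb, C_0, zero_mul, add_zero, add_zero]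

lemma neg_nextCoeff_ne_zero_or_of_ne_X_sq {f : ℚ[X]} (hf : f.IsMonicOfDegree 2)
    (hfX : f ≠ X ^ 2) :
    -f.nextCoeff ≠ 0 ∨ f.nextCoeff ^ 2 - 2 * f.reverse.coeff 2 ≠ 0 := by
  contrapose! hfX
  have hnext : f.nextCoeff = 0 := neg_eq_zero.1 hfX.1
  exact eq_X_sq_of_coeff_eq_zero hf hnext (by simpa [hnext] using hfX.2)

lemma rpow_sq_sub_one_div_two_add_le {H x : ℝ} (hH : 1 ≤ H) (hx : 2 ≤ x) (ε : ℝ) :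
    H ^ ((x ^ 2 - 1) / 2 + ε) ≤ H ^ (x ^ 2 / 2 - 1 / (2 * x - 2) + ε) := by
  have h : 1 / (2 * x - 2) ≤ 1 / 2 := one_div_le_one_div_of_le two_pos (by linarith)
  exact Real.rpow_le_rpow_of_exponent_le hH (by linarith)

end CharpolyFibres

theorem stmt16_general (n : ℕ) (hn : 0 < n) {ε : ℝ} (hε : 0 < ε) :
    ∃ C : ℝ, 0 ≤ C ∧ ∀ H : ℝ, 1 ≤ H → ∀ t s : ℚ,
      (n = 2 → t ≠ 0 ∨ s ≠ 0 → ((egyptianMatrices (Fin n) H t s).ncard : ℝ) ≤ C * H ^ ε) ∧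
      (n = 3 → ((egyptianMatrices (Fin n) H t s).ncard : ℝ) ≤ C * H ^ (3 + ε)) ∧
      (t ≠ 0 →
        ((egyptianMatrices (Fin n) H t s).ncard : ℝ) ≤ C * H ^ (((n : ℝ) ^ 2 - 1) / 2 + ε)) ∧
      ((egyptianMatrices (Fin n) H t s).ncard : ℝ) ≤ C * H ^ ((n : ℝ) ^ 2 / 2 + ε) := by
  obtain ⟨C, hC0, hC⟩ := exists_divisorLoss_le_mul_rpow n hε
  have : NeZero n := ⟨hn.ne'⟩
  have hn1 : (1 : ℝ) ≤ n := by exact_mod_cast hn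
  refine ⟨C, hC0, fun H hH t s => ?_⟩
  have hN : 0 < ⌊H⌋₊ := Nat.floor_pos.2 hH
  refine ⟨?_, ?_, fun ht => ?_, ?_⟩
  · rintro rfl hts
    have hcard : (#(reciprocalMatrices (Fin 2) ⌊H⌋₊ t s) : ℝ) ≤
        divisorLoss 2 ⌊H⌋₊ * (⌊H⌋₊ : ℝ) ^ (0 : ℝ) := by
      rw [Real.rpow_zero, mul_one]
      exact_mod_cast card_reciprocalMatrices_fin_two_le hN hts
    simpa only [zero_add] using
      ncard_egyptianMatrices_le_mul_rpow hC0 hC (by positivity) hH hcard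
  · rintro rfl
    exact ncard_egyptianMatrices_le_mul_rpow hC0 hC (by positivity) hH
      (natCast_card_reciprocalMatrices_le_of_card_eq_three (Fintype.card_fin 3) hN t s)
  · exact ncard_egyptianMatrices_le_mul_rpow hC0 hC (by nlinarith) hH
      (by simpa only [Fintype.card_fin] using
        natCast_card_reciprocalMatrices_le_rpow_of_trace_ne_zero (ι := Fin n) hN ht s)
  · exact ncard_egyptianMatrices_le_mul_rpow hC0 hC (by positivity) hH
      (by simpa only [Fintype.card_fin] using
        natCast_card_reciprocalMatrices_le_rpow (ι := Fin n) hN t s)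

theorem stmt16 (n : ℕ) (hn : n ≥ 2) :
    ∀ ε > (0 : ℝ), ∃ C : ℝ, ∀ H : ℝ, H ≥ 2 →
      ∀ f : Polynomial ℚ, f.Monic → f.natDegree = n →
      (n = 2 → f ≠ Polynomial.X ^ 2 →
        (Set.ncard {A : Matrix (Fin n) (Fin n) ℚ |
            (∀ i j, A i j ∈ Egyptian H) ∧ A.charpoly = f} : ℝ) ≤ C * H ^ ε) ∧
      (n = 3 →
        (Set.ncard {A : Matrix (Fin n) (Fin n) ℚ |
            (∀ i j, A i j ∈ Egyptian H) ∧ A.charpoly = f} : ℝ) ≤ C * H ^ ((3 : ℝ) + ε)) ∧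
      (n ≥ 4 → f.coeff (n - 1) ≠ 0 →
        (Set.ncard {A : Matrix (Fin n) (Fin n) ℚ |
            (∀ i j, A i j ∈ Egyptian H) ∧ A.charpoly = f} : ℝ) ≤
          C * H ^ ((n ^ 2 : ℝ) / 2 - 1 / (2 * n - 2) + ε)) ∧
      (n ≥ 4 → f.coeff (n - 1) = 0 →
        (Set.ncard {A : Matrix (Fin n) (Fin n) ℚ |
            (∀ i j, A i j ∈ Egyptian H) ∧ A.charpoly = f} : ℝ) ≤
          C * H ^ ((n ^ 2 : ℝ) / 2 + ε)) := by
  intro ε hε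
  obtain ⟨C, hC0, hC⟩ := stmt16_general n (by omega) hε
  refine ⟨C, fun H hH f hf hdeg => ?_⟩
  have hH1 : 1 ≤ H := by linarith
  have hn2 : (2 : ℝ) ≤ n := by exact_mod_cast hn
  have hfibre := Nat.cast_le (α := ℝ).2 (ncard_setOf_charpoly_eq_le (ι := Fin n) H f)
  obtain ⟨htwo, hthree, htrace, hall⟩ := hC H hH1 (-f.nextCoeff) _
  have hcoeff : f.nextCoeff = f.coeff (n - 1) :=
    hdeg ▸ nextCoeff_of_natDegree_pos (by omega)
  exact ⟨fun h2 hfX => hfibre.trans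
      (htwo h2 (neg_nextCoeff_ne_zero_or_of_ne_X_sq ⟨hdeg.trans h2, hf⟩ hfX)),
    fun h3 => hfibre.trans (hthree h3),
    fun _ hc => (hfibre.trans (htrace (neg_ne_zero.2 (hcoeff ▸ hc)))).trans
      (mul_le_mul_of_nonneg_left (rpow_sq_sub_one_div_two_add_le hH1 hn2 ε) hC0),
    fun _ _ => hfibre.trans hall⟩
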